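/- (Theorem 4.1(iv), third case.) Uniformly over all λ ∈ C⁺ and all X ∈ a with x3 ≥ x1 ≥ x2 such that β_λ ≥ α_λ and α_λ α_{X⁺} ≤ β_λ β_{X⁺}, one has E_k(X,λ) ≍ e^{⟨λ,X⁺⟩} / [ (1+α_λ α_{X⁺})^{k+1} (1+β_λ β_{X⁺})^{k} (1+γ_λ γ_{X⁺})^{k+1} ]. -/

import Mathlib

open Real MeasureTheory

/-- The rank-one Dunkl kernel `E_k^{rk1}(x,v)`. -/
noncomputable def Erk1 (k x v : ℝ) : ℝ :=
  (Real.Gamma (k + 1/2) / (Real.sqrt Real.pi * Real.Gamma k)) *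
    ∫ z in (-1 : ℝ)..1, Real.exp (z * x * v) * (1 - z) ^ (k - 1) * (1 + z) ^ k

/-- The normalized modified Bessel function `𝒥_a(y)`, for `a > -1/2`. -/
noncomputable def besselJ (a y : ℝ) : ℝ :=
  (Real.Gamma (a + 1) / (Real.sqrt Real.pi * Real.Gamma (a + 1/2))) *
    ∫ z in (-1 : ℝ)..1, Real.exp (y * z) * (1 - z ^ 2) ^ (a - 1/2)

/-- `W_k(λ,ν)`. -/
noncomputable def Wk (k l1 l2 l3 n1 n2 : ℝ) : ℝ :=
  ((l1 - n1) * (l1 - n2) * (n1 - l2) * (l2 - n2) * (n1 - l3) * (n2 - l3)) ^ (k - 1)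

/-- `V(λ) = (λ1-λ2)(λ1-λ3)(λ2-λ3)`. -/
def Vlam (l1 l2 l3 : ℝ) : ℝ := (l1 - l2) * (l1 - l3) * (l2 - l3)

/-- The `A₂` Dunkl kernel `E_k(X,λ)`, defined via the rank-one kernel formula. -/
noncomputable def EkA2 (k x1 x2 x3 l1 l2 l3 : ℝ) : ℝ :=
  (3 * Real.Gamma (3 * k) / (Vlam l1 l2 l3 ^ (2 * k) * Real.Gamma k ^ 2)) *
    ∫ n2 in l3..l2, ∫ n1 in l2..l1,
      ((n1 - l2) * (l1 - n2) * Erk1 k ((x1 - x2) / 2) (n1 - n2)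
        + (l1 - n1) * (l2 - n2) * Erk1 k (-(x1 - x2) / 2) (n1 - n2))
      * ((n1 - l3) * (n2 - l3)) * Real.exp ((x1 + x2 - 2 * x3) * (n1 + n2) / 2)
      * Wk k l1 l2 l3 n1 n2

/-!
The rank-one kernel `E(±x, v)` is a constant times `e^(xv)` times the Laplace transform `K` of a
beta density on `[0, 2]`, and every such transform satisfies
`∫₀ᴺ u^(p-1) (N-u)^(q-1) e^(-yu) du ≍ N^(p+q-1) (1+yN)^(-p)`.

In the variables `t = ν₂ - λ₃` and `s = ν₁ - λ₂` the exponential `e^⟨λ, X⁺⟩` factors out of the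
`A₂` integral, and the decay `e^(-(a+b)t) e^(-as)` remains, where `a` and `b` are the simple roots
of `X⁺`. With `B = β_λ`, the argument `v = ν₁ - ν₂` of the rank-one kernel satisfies `B ≤ v + t`,
so half of the decay in `t` turns the factor `(1+bv)^(-p)` coming from `K` into `(1+Bb)^(-p)`. The
integrand is thus sandwiched between products of one-variable beta-exponential densities. The
hypothesis `α_λ α_{X⁺} ≤ β_λ β_{X⁺}` makes the contribution of `E(-x, v)` at most comparable to
that of `E(x, v)`.
-/

theorem rpow_le_two_rpow_abs {x : ℝ} (hx : 1 / 2 ≤ x) (hx1 : x ≤ 1) (r : ℝ) :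
    x ^ r ≤ 2 ^ |r| :=
  calc x ^ r ≤ x ^ (-|r|) :=
        rpow_le_rpow_of_exponent_ge (by linarith) hx1 (neg_abs_le r)
    _ ≤ (1 / 2) ^ (-|r|) :=
        rpow_le_rpow_of_nonpos (by norm_num) hx (neg_nonpos.2 (abs_nonneg r))
    _ = 2 ^ |r| := by rw [one_div, inv_rpow zero_le_two, rpow_neg zero_le_two, inv_inv]

theorem inv_two_rpow_abs_le_rpow {x : ℝ} (hx : 1 / 2 ≤ x) (hx1 : x ≤ 1) (r : ℝ) :
    (2 ^ |r|)⁻¹ ≤ x ^ r := by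
  have hx0 : 0 < x := by linarith
  rw [← inv_inv (x ^ r), ← rpow_neg hx0.le]
  exact inv_anti₀ (by positivity) (by simpa using rpow_le_two_rpow_abs hx hx1 (-r))

theorem rpow_mul_rpow_sub_one_le {x y : ℝ} (hx : 0 < x) (hxy : x ≤ y) (r : ℝ) :
    x ^ r * y ^ (r - 1) ≤ x ^ (r - 1) * y ^ r := by
  have hy := hx.trans_le hxy
  rw [rpow_sub_one hx.ne', rpow_sub_one hy.ne', mul_div_assoc', div_mul_eq_mul_div]
  gcongr

theorem rpow_le_mul_exp {p c x : ℝ} (hp : 0 < p) (hc : 0 < c) (hx : 0 < x) :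
    x ^ p ≤ (p / c) ^ p * exp (c * x - p) := by
  have hlog : log (x / (p / c)) ≤ x / (p / c) - 1 := log_le_sub_one_of_pos (by positivity)
  rw [log_div hx.ne' (by positivity)] at hlog
  rw [rpow_def_of_pos hx, rpow_def_of_pos (by positivity), ← exp_add, exp_le_exp]
  calc log x * p ≤ (log (p / c) + (x / (p / c) - 1)) * p := by gcongr; linarith
    _ = log (p / c) * p + (c * x - p) := by field_simp

theorem exists_exp_neg_div_rpow_le {p c : ℝ} (hp : 0 < p) (hc : 0 < c) :
    ∃ C > 0, ∀ x y z : ℝ, 0 ≤ x → 0 ≤ y → 0 ≤ z → z ≤ x + y →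
      exp (-(c * y)) / (1 + x) ^ p ≤ C / (1 + z) ^ p := by
  refine ⟨(p / c) ^ p * exp (c - p), by positivity, fun x y z hx hy hz hzxy => ?_⟩
  have hsub : 1 + z ≤ (1 + x) * (1 + y) := by nlinarith [mul_nonneg hx hy]
  rw [div_le_div_iff₀ (by positivity) (by positivity)]
  calc exp (-(c * y)) * (1 + z) ^ p
      ≤ exp (-(c * y)) * ((1 + x) * (1 + y)) ^ p := by gcongr
    _ = exp (-(c * y)) * (1 + y) ^ p * (1 + x) ^ p := by
        rw [mul_rpow (by positivity) (by positivity)]; ring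
    _ ≤ exp (-(c * y)) * ((p / c) ^ p * exp (c * (1 + y) - p)) * (1 + x) ^ p := by
        gcongr; exact rpow_le_mul_exp hp hc (by positivity)
    _ = (p / c) ^ p * exp (c - p) * (1 + x) ^ p := by
        rw [mul_left_comm, ← exp_add]; ring_nf

/-- The density `u^(p-1) (N-u)^(q-1) e^(-yu)` on `[0, N]`, an exponentially tilted beta density. -/
noncomputable def kummerWeight (p q N y u : ℝ) : ℝ :=
  u ^ (p - 1) * (N - u) ^ (q - 1) * exp (-(y * u))

/-- The total mass of `kummerWeight`; up to the factor `N^(p+q-1) B(p, q)` this is the value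
`₁F₁(p; p+q; -Ny)` of Kummer's confluent hypergeometric function. -/
noncomputable def kummerIntegral (p q N y : ℝ) : ℝ :=
  ∫ u in 0..N, kummerWeight p q N y u

section Kummer

variable {p q N y : ℝ}

theorem kummerWeight_nonneg {u : ℝ} (hu : 0 ≤ u) (huN : u ≤ N) : 0 ≤ kummerWeight p q N y u :=
  mul_nonneg (mul_nonneg (rpow_nonneg hu _) (rpow_nonneg (sub_nonneg.2 huN) _)) (exp_pos _).le

theorem kummerIntegral_nonneg (hN : 0 ≤ N) : 0 ≤ kummerIntegral p q N y :=
  intervalIntegral.integral_nonneg hN fun _ hu => kummerWeight_nonneg hu.1 hu.2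

theorem intervalIntegrable_kummerWeight (hp : 0 < p) (hq : 0 < q) (hN : 0 < N) (y : ℝ) :
    IntervalIntegrable (kummerWeight p q N y) volume 0 N := by
  have left_half {p : ℝ} (hp : 0 < p) (q : ℝ) :
      IntervalIntegrable (fun u => u ^ (p - 1) * (N - u) ^ (q - 1)) volume 0 (N / 2) := by
    refine (intervalIntegral.intervalIntegrable_rpow' (by linarith)).mul_continuousOn ?_
    rw [Set.uIcc_of_le (by positivity)]
    exact ContinuousOn.rpow_const (by fun_prop) fun u hu => Or.inl (by linarith [hu.2])
  have right_half :
      IntervalIntegrable (fun u => u ^ (p - 1) * (N - u) ^ (q - 1)) volume (N / 2) N := by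
    simpa [sub_half, mul_comm] using ((left_half hq p).comp_sub_left N).symm
  exact ((left_half hp q).trans right_half).mul_continuousOn (by fun_prop)

theorem kummerIntegral_eq_rpow_mul (hN : 0 < N) :
    kummerIntegral p q N y = N ^ (p + q - 1) * kummerIntegral p q 1 (y * N) := by
  have hscale : ∀ w ∈ Set.uIcc (0 : ℝ) 1, kummerWeight p q N y (N * w) =
      N ^ (p - 1) * N ^ (q - 1) * kummerWeight p q 1 (y * N) w := by
    rw [Set.uIcc_of_le zero_le_one]
    intro w hw
    rw [kummerWeight, kummerWeight, show N - N * w = N * (1 - w) by ring,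
      mul_rpow hN.le hw.1, mul_rpow hN.le (sub_nonneg.2 hw.2), mul_assoc y N w]
    ring
  calc kummerIntegral p q N y
      = N * ∫ w in 0..1, kummerWeight p q N y (N * w) := by
        simp [kummerIntegral]
    _ = N ^ (1 + (p - 1) + (q - 1)) * kummerIntegral p q 1 (y * N) := by
        rw [intervalIntegral.integral_congr hscale, intervalIntegral.integral_const_mul,
          kummerIntegral, rpow_add hN, rpow_add hN, rpow_one]
        ring
    _ = N ^ (p + q - 1) * kummerIntegral p q 1 (y * N) := by ring_nf

theorem intervalIntegrable_rpow_mul_exp_neg (hp : 0 < p) (r : ℝ) :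
    IntervalIntegrable (fun w => w ^ (p - 1) * exp (-(r * w))) volume 0 1 :=
  (intervalIntegral.intervalIntegrable_rpow' (by linarith)).mul_continuousOn (by fun_prop)

theorem integral_rpow_mul_exp_neg_le {r : ℝ} (hp : 0 < p) (hr : 0 < r) :
    ∫ w in (0 : ℝ)..1, w ^ (p - 1) * exp (-(r * w)) ≤ Gamma p / r ^ p := by
  have hGamma := integral_rpow_mul_exp_neg_mul_Ioi hp hr
  have hint : IntegrableOn (fun w : ℝ => w ^ (p - 1) * exp (-(r * w))) (Set.Ioi 0) := by
    refine Integrable.of_integral_ne_zero ?_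
    rw [hGamma]
    exact (mul_pos (by positivity) (Gamma_pos_of_pos hp)).ne'
  calc ∫ w in (0 : ℝ)..1, w ^ (p - 1) * exp (-(r * w))
      ≤ ∫ w in Set.Ioi (0 : ℝ), w ^ (p - 1) * exp (-(r * w)) := by
        rw [intervalIntegral.integral_of_le zero_le_one]
        refine setIntegral_mono_set hint ?_ (.of_forall Set.Ioc_subset_Ioi_self)
        filter_upwards [ae_restrict_mem measurableSet_Ioi] with w hw
        exact mul_nonneg (rpow_nonneg (le_of_lt hw) _) (exp_pos _).le
    _ = Gamma p / r ^ p := by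
        rw [hGamma, one_div, inv_rpow hr.le]; ring

theorem kummerWeight_one_le {w : ℝ} (hw : 0 ≤ w) (hw1 : w ≤ 1) (hy : 0 ≤ y) :
    kummerWeight p q 1 y w ≤ 2 ^ |q - 1| * exp 1 * (w ^ (p - 1) * exp (-((1 + y) * w))) +
      exp (-(1 / 2 * y)) * kummerWeight p q 1 0 w := by
  have : 0 ≤ 1 - w := sub_nonneg.2 hw1
  simp only [kummerWeight]
  rcases le_total w (1 / 2) with h | h
  · refine le_add_of_le_of_nonneg ?_ (by positivity)
    calc w ^ (p - 1) * (1 - w) ^ (q - 1) * exp (-(y * w))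
        ≤ w ^ (p - 1) * 2 ^ |q - 1| * exp (1 + -((1 + y) * w)) := by
          gcongr
          · exact rpow_le_two_rpow_abs (by linarith) (by linarith) _
          · linarith
      _ = _ := by rw [exp_add]; ring
  · refine le_add_of_nonneg_of_le (by positivity) ?_
    calc w ^ (p - 1) * (1 - w) ^ (q - 1) * exp (-(y * w))
        ≤ w ^ (p - 1) * (1 - w) ^ (q - 1) * exp (-(1 / 2 * y)) := by
          gcongr ?_ * exp ?_
          nlinarith
      _ = _ := by simp only [zero_mul, neg_zero, exp_zero]; ring

theorem exists_kummerIntegral_one_le (hp : 0 < p) (hq : 0 < q) :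
    ∃ C > 0, ∀ y : ℝ, 0 ≤ y → kummerIntegral p q 1 y ≤ C / (1 + y) ^ p := by
  obtain ⟨D, hD, hexp⟩ := exists_exp_neg_div_rpow_le hp one_half_pos
  have := Gamma_pos_of_pos hp
  have hβ : 0 ≤ kummerIntegral p q 1 0 := kummerIntegral_nonneg zero_le_one
  refine ⟨2 ^ |q - 1| * exp 1 * Gamma p + D * kummerIntegral p q 1 0, by positivity,
    fun y hy => ?_⟩
  have hi₁ := (intervalIntegrable_rpow_mul_exp_neg hp (1 + y)).const_mul (2 ^ |q - 1| * exp 1)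
  have hi₂ := (intervalIntegrable_kummerWeight hp hq one_pos 0).const_mul (exp (-(1 / 2 * y)))
  calc kummerIntegral p q 1 y
      ≤ 2 ^ |q - 1| * exp 1 * (∫ w in (0 : ℝ)..1, w ^ (p - 1) * exp (-((1 + y) * w))) +
          exp (-(1 / 2 * y)) * kummerIntegral p q 1 0 := by
        rw [kummerIntegral, kummerIntegral, ← intervalIntegral.integral_const_mul,
          ← intervalIntegral.integral_const_mul, ← intervalIntegral.integral_add hi₁ hi₂]
        exact intervalIntegral.integral_mono_on zero_le_one
          (intervalIntegrable_kummerWeight hp hq one_pos y) (hi₁.add hi₂)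
          fun w hw => kummerWeight_one_le hw.1 hw.2 hy
    _ ≤ 2 ^ |q - 1| * exp 1 * (Gamma p / (1 + y) ^ p) +
          D / (1 + y) ^ p * kummerIntegral p q 1 0 := by
        gcongr
        · exact integral_rpow_mul_exp_neg_le hp (by positivity)
        · simpa using hexp 0 y y le_rfl hy hy (by simp)
    _ = _ := by ring

theorem exists_kummerIntegral_le (hp : 0 < p) (hq : 0 < q) :
    ∃ C > 0, ∀ N y : ℝ, 0 < N → 0 ≤ y →
      kummerIntegral p q N y ≤ C * (N ^ (p + q - 1) / (1 + y * N) ^ p) := by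
  obtain ⟨C, hC, hone⟩ := exists_kummerIntegral_one_le hp hq
  refine ⟨C, hC, fun N y hN hy => ?_⟩
  calc kummerIntegral p q N y = N ^ (p + q - 1) * kummerIntegral p q 1 (y * N) :=
        kummerIntegral_eq_rpow_mul hN
    _ ≤ N ^ (p + q - 1) * (C / (1 + y * N) ^ p) := by gcongr; exact hone _ (by positivity)
    _ = C * (N ^ (p + q - 1) / (1 + y * N) ^ p) := mul_div_left_comm _ _ _

theorem le_kummerWeight_one {w : ℝ} (hw : 0 ≤ w) (hw2 : w ≤ 1 / 2) (hyw : y * w ≤ 1) :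
    (2 ^ |q - 1|)⁻¹ * exp (-1) * w ^ (p - 1) ≤ kummerWeight p q 1 y w :=
  calc (2 ^ |q - 1|)⁻¹ * exp (-1) * w ^ (p - 1)
      = w ^ (p - 1) * (2 ^ |q - 1|)⁻¹ * exp (-1) := by ring
    _ ≤ w ^ (p - 1) * (1 - w) ^ (q - 1) * exp (-(y * w)) := by
        have hw' : 0 < 1 - w := by linarith
        gcongr
        exact inv_two_rpow_abs_le_rpow (by linarith) (by linarith) _

theorem exists_le_kummerIntegral_one (hp : 0 < p) (hq : 0 < q) :
    ∃ c > 0, ∀ y : ℝ, 0 ≤ y → c / (1 + y) ^ p ≤ kummerIntegral p q 1 y := by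
  set m : ℝ := (2 ^ |q - 1|)⁻¹ * exp (-1)
  refine ⟨m * ((1 / 2) ^ p / p), by positivity, fun y hy => ?_⟩
  set δ : ℝ := 1 / 2 / (1 + y) with hδ
  have hδ0 : 0 < δ := by positivity
  have hδ_le : δ ≤ 1 / 2 := div_le_self (by norm_num) (by linarith)
  have hyδ : y * δ ≤ 1 := by rw [hδ, mul_div_assoc', div_le_one (by positivity)]; linarith
  have hint := intervalIntegrable_kummerWeight hp hq one_pos y
  have hint_left : IntervalIntegrable (kummerWeight p q 1 y) volume 0 δ :=
    hint.mono_set (Set.uIcc_subset_uIcc_left (Set.mem_uIcc_of_le hδ0.le (by linarith)))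
  calc m * ((1 / 2) ^ p / p) / (1 + y) ^ p
      = ∫ w in (0 : ℝ)..δ, m * w ^ (p - 1) := by
        rw [intervalIntegral.integral_const_mul, integral_rpow (Or.inl (by linarith)),
          sub_add_cancel, zero_rpow hp.ne', hδ, div_rpow one_half_pos.le (by positivity)]
        ring
    _ ≤ ∫ w in (0 : ℝ)..δ, kummerWeight p q 1 y w :=
        intervalIntegral.integral_mono_on hδ0.le
          ((intervalIntegral.intervalIntegrable_rpow' (by linarith)).const_mul m) hint_left
          fun w hw => le_kummerWeight_one hw.1 (hw.2.trans hδ_le)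
            ((mul_le_mul_of_nonneg_left hw.2 hy).trans hyδ)
    _ ≤ kummerIntegral p q 1 y := by
        refine intervalIntegral.integral_mono_interval le_rfl hδ0.le (by linarith) ?_ hint
        filter_upwards [ae_restrict_mem measurableSet_Ioc] with w hw
        exact kummerWeight_nonneg hw.1.le hw.2

theorem exists_le_kummerIntegral (hp : 0 < p) (hq : 0 < q) :
    ∃ c > 0, ∀ N y : ℝ, 0 < N → 0 ≤ y →
      c * (N ^ (p + q - 1) / (1 + y * N) ^ p) ≤ kummerIntegral p q N y := by
  obtain ⟨c, hc, hone⟩ := exists_le_kummerIntegral_one hp hq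
  refine ⟨c, hc, fun N y hN hy => ?_⟩
  calc c * (N ^ (p + q - 1) / (1 + y * N) ^ p) = N ^ (p + q - 1) * (c / (1 + y * N) ^ p) :=
        mul_div_left_comm _ _ _
    _ ≤ N ^ (p + q - 1) * kummerIntegral p q 1 (y * N) := by gcongr; exact hone _ (by positivity)
    _ = kummerIntegral p q N y := (kummerIntegral_eq_rpow_mul hN).symm

theorem measurable_kummerIntegral : Measurable (kummerIntegral p q N) := by
  have hweight : StronglyMeasurable (Function.uncurry fun y u => kummerWeight p q N y u) := by
    refine Measurable.stronglyMeasurable ?_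
    unfold Function.uncurry kummerWeight
    fun_prop
  unfold kummerIntegral intervalIntegral
  exact (hweight.integral_prod_right.sub hweight.integral_prod_right).measurable

end Kummer

section IteratedIntegral

variable {a b c d : ℝ} {H : ℝ → ℝ → ℝ} {f g : ℝ → ℝ}

theorem integral_integral_eq_setIntegral_prod (hab : a ≤ b) (hcd : c ≤ d)
    (hH : IntegrableOn (Function.uncurry H) (Set.Ioo a b ×ˢ Set.Ioo c d)) :
    ∫ t in a..b, ∫ s in c..d, H t s =
      ∫ z in Set.Ioo a b ×ˢ Set.Ioo c d, Function.uncurry H z := by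
  simp only [intervalIntegral.integral_of_le hab, intervalIntegral.integral_of_le hcd,
    integral_Ioc_eq_integral_Ioo]
  rw [Measure.volume_eq_prod] at hH ⊢
  exact (setIntegral_prod _ hH).symm

theorem integrableOn_Ioo_prod_mul (hab : a ≤ b) (hcd : c ≤ d)
    (hf : IntervalIntegrable f volume a b) (hg : IntervalIntegrable g volume c d) :
    IntegrableOn (Function.uncurry fun t s => f t * g s) (Set.Ioo a b ×ˢ Set.Ioo c d) := by
  rw [IntegrableOn, Measure.volume_eq_prod, ← Measure.prod_restrict]
  exact ((intervalIntegrable_iff_integrableOn_Ioo_of_le hab).1 hf).mul_prod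
    ((intervalIntegrable_iff_integrableOn_Ioo_of_le hcd).1 hg)

theorem integrableOn_Ioo_prod_of_le_mul (hab : a ≤ b) (hcd : c ≤ d)
    (hH : Measurable (Function.uncurry H))
    (hf : IntervalIntegrable f volume a b) (hg : IntervalIntegrable g volume c d)
    (h0 : ∀ t ∈ Set.Ioo a b, ∀ s ∈ Set.Ioo c d, 0 ≤ H t s)
    (hle : ∀ t ∈ Set.Ioo a b, ∀ s ∈ Set.Ioo c d, H t s ≤ f t * g s) :
    IntegrableOn (Function.uncurry H) (Set.Ioo a b ×ˢ Set.Ioo c d) := by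
  refine (integrableOn_Ioo_prod_mul hab hcd hf hg).mono' hH.aestronglyMeasurable ?_
  filter_upwards [ae_restrict_mem (measurableSet_Ioo.prod measurableSet_Ioo)] with ⟨t, s⟩ ⟨ht, hs⟩
  exact (norm_of_nonneg (h0 t ht s hs)).trans_le (hle t ht s hs)

theorem integral_integral_mono {K : ℝ → ℝ → ℝ} (hab : a ≤ b) (hcd : c ≤ d)
    (hH : IntegrableOn (Function.uncurry H) (Set.Ioo a b ×ˢ Set.Ioo c d))
    (hK : IntegrableOn (Function.uncurry K) (Set.Ioo a b ×ˢ Set.Ioo c d))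
    (hle : ∀ t ∈ Set.Ioo a b, ∀ s ∈ Set.Ioo c d, H t s ≤ K t s) :
    ∫ t in a..b, ∫ s in c..d, H t s ≤ ∫ t in a..b, ∫ s in c..d, K t s := by
  rw [integral_integral_eq_setIntegral_prod hab hcd hH,
    integral_integral_eq_setIntegral_prod hab hcd hK]
  exact setIntegral_mono_on hH hK (measurableSet_Ioo.prod measurableSet_Ioo)
    fun z hz => hle z.1 hz.1 z.2 hz.2

theorem integral_integral_mul (f g : ℝ → ℝ) :
    ∫ t in a..b, ∫ s in c..d, f t * g s = (∫ t in a..b, f t) * ∫ s in c..d, g s := by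
  simp only [intervalIntegral.integral_const_mul, intervalIntegral.integral_mul_const]

end IteratedIntegral

/-- The constant in front of the integral defining `Erk1 k`. -/
noncomputable def rankOneConst (k : ℝ) : ℝ :=
  Gamma (k + 1 / 2) / (√π * Gamma k)

theorem rankOneConst_pos {k : ℝ} (hk : 0 < k) : 0 < rankOneConst k :=
  div_pos (Gamma_pos_of_pos (by linarith))
    (mul_pos (sqrt_pos.2 pi_pos) (Gamma_pos_of_pos hk))

theorem Erk1_eq (k x v : ℝ) :
    Erk1 k x v = rankOneConst k * (exp (x * v) * kummerIntegral k (k + 1) 2 (x * v)) := by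
  have hflip (f : ℝ → ℝ) : ∫ z in (-1 : ℝ)..1, f z = ∫ u in (0 : ℝ)..2, f (1 - u) := by
    rw [intervalIntegral.integral_comp_sub_left]
    norm_num
  rw [Erk1, hflip, rankOneConst]
  congr 1
  rw [kummerIntegral, ← intervalIntegral.integral_const_mul]
  refine intervalIntegral.integral_congr fun u _ => ?_
  simp only [kummerWeight]
  rw [show (1 - u) * x * v = x * v + -(x * v * u) by ring, exp_add, sub_sub_cancel,
    add_sub_cancel_right, show 1 + (1 - u) = 2 - u by ring]
  ring

theorem Erk1_neg_eq (k x v : ℝ) :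
    Erk1 k (-x) v = rankOneConst k * (exp (x * v) * kummerIntegral (k + 1) k 2 (x * v)) := by
  have hshift (f : ℝ → ℝ) : ∫ z in (-1 : ℝ)..1, f z = ∫ u in (0 : ℝ)..2, f (u - 1) := by
    rw [intervalIntegral.integral_comp_sub_right]
    norm_num
  rw [Erk1, hshift, rankOneConst]
  congr 1
  rw [kummerIntegral, ← intervalIntegral.integral_const_mul]
  refine intervalIntegral.integral_congr fun u _ => ?_
  simp only [kummerWeight]
  rw [show (u - 1) * -x * v = x * v + -(x * v * u) by ring, exp_add, add_sub_cancel,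
    add_sub_cancel_right, show 1 - (u - 1) = 2 - u by ring]
  ring

/-- The integrand of `EkA2` in the variables `t = ν₂ - λ₃` and `s = ν₁ - λ₂`, with the constants
and the factor `e^⟨λ, X⁺⟩` removed. Here `A = λ₁ - λ₂` and `B = λ₂ - λ₃` are the simple roots of
`λ`, and `a = x₃ - x₁` and `b = x₁ - x₂` those of `X⁺`. -/
noncomputable def reducedIntegrand (k A B a b t s : ℝ) : ℝ :=
  t ^ k * exp (-((a + b) * t)) * exp (-(a * s)) * (B + s) ^ k *
    (s ^ k * (A - s) ^ (k - 1) * (B - t) ^ (k - 1) * (A + (B - t)) ^ k *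
        kummerIntegral k (k + 1) 2 (b / 2 * (s + (B - t))) +
      s ^ (k - 1) * (A - s) ^ k * (B - t) ^ k * (A + (B - t)) ^ (k - 1) *
        kummerIntegral (k + 1) k 2 (b / 2 * (s + (B - t))))

/-- The double integral to which `EkA2` reduces, up to explicit factors. -/
noncomputable def reducedIntegral (k A B a b : ℝ) : ℝ :=
  ∫ t in 0..B, ∫ s in 0..A, reducedIntegrand k A B a b t s

theorem add_mul_mul_rpow_sub_one {k t t' s s' g h c f e K₁ K₂ : ℝ} (hk : 0 < k) (ht : 0 ≤ t)
    (ht' : 0 ≤ t') (hs : 0 ≤ s) (hs' : 0 ≤ s') (hg : 0 ≤ g) (hh : 0 ≤ h) :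
    (s * g * (c * (f * K₁)) + s' * t' * (c * (f * K₂))) * (h * t) * e *
        (s' * g * s * t' * h * t) ^ (k - 1) =
      c * (f * e) * (t ^ k * h ^ k * (s ^ k * s' ^ (k - 1) * t' ^ (k - 1) * g ^ k * K₁ +
        s ^ (k - 1) * s' ^ k * t' ^ k * g ^ (k - 1) * K₂)) := by
  have hpow {u : ℝ} (hu : 0 ≤ u) : u ^ k = u * u ^ (k - 1) := by
    rw [← rpow_one_add' hu (by simpa using hk.ne'), add_sub_cancel]
  rw [mul_rpow (by positivity) ht, mul_rpow (by positivity) hh, mul_rpow (by positivity) ht',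
    mul_rpow (by positivity) hs, mul_rpow hs' hg, hpow ht, hpow hh, hpow hs, hpow hs', hpow ht',
    hpow hg]
  ring

theorem EkA2_integrand_eq {k l1 l2 l3 t s : ℝ} (hk : 0 < k) (x1 x2 x3 : ℝ)
    (ht : 0 ≤ t) (hs : 0 ≤ s) (htB : t ≤ l2 - l3) (hsA : s ≤ l1 - l2) :
    ((l2 + s - l2) * (l1 - (l3 + t)) * Erk1 k ((x1 - x2) / 2) (l2 + s - (l3 + t))
        + (l1 - (l2 + s)) * (l2 - (l3 + t)) * Erk1 k (-(x1 - x2) / 2) (l2 + s - (l3 + t)))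
      * ((l2 + s - l3) * (l3 + t - l3))
      * exp ((x1 + x2 - 2 * x3) * (l2 + s + (l3 + t)) / 2)
      * Wk k l1 l2 l3 (l2 + s) (l3 + t) =
    rankOneConst k * exp (l1 * x3 + l2 * x1 + l3 * x2 - (l1 + l2 + l3) * x3) *
      reducedIntegrand k (l1 - l2) (l2 - l3) (x3 - x1) (x1 - x2) t s := by
  obtain ⟨A, rfl⟩ : ∃ A, l1 = l2 + A := ⟨l1 - l2, by ring⟩
  obtain ⟨B, rfl⟩ : ∃ B, l2 = l3 + B := ⟨l2 - l3, by ring⟩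
  simp only [add_sub_cancel_left] at htB hsA ⊢
  have hexp : exp ((x1 - x2) / 2 * (s + (B - t))) *
      exp ((x1 + x2 - 2 * x3) * (l3 + B + s + (l3 + t)) / 2) =
      exp ((l3 + B + A) * x3 + (l3 + B) * x1 + l3 * x2 - (l3 + B + A + (l3 + B) + l3) * x3) *
        exp (-((x3 - x1 + (x1 - x2)) * t)) * exp (-((x3 - x1) * s)) := by
    simp only [← exp_add]
    ring_nf
  have hA : 0 ≤ A := hs.trans hsA
  have hB : 0 ≤ B := ht.trans htB
  have hs' : 0 ≤ A - s := sub_nonneg.2 hsA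
  have ht' : 0 ≤ B - t := sub_nonneg.2 htB
  rw [Wk, show l3 + B + A - (l3 + B + s) = A - s by ring,
    show l3 + B + A - (l3 + t) = A + (B - t) by ring,
    show l3 + B + s - (l3 + B) = s by ring, show l3 + B - (l3 + t) = B - t by ring,
    show l3 + B + s - l3 = B + s by ring, show l3 + t - l3 = t by ring,
    show l3 + B + s - (l3 + t) = s + (B - t) by ring,
    neg_div, Erk1_eq, Erk1_neg_eq,
    add_mul_mul_rpow_sub_one hk ht ht' hs hs' (by positivity) (by positivity), hexp,
    reducedIntegrand]
  ring

/-- The factor of `EkA2 k` that depends neither on `λ` nor on `X` once the kernel is written in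
terms of `reducedIntegral`. -/
noncomputable def kernelConst (k : ℝ) : ℝ :=
  3 * Gamma (3 * k) * rankOneConst k / Gamma k ^ 2

theorem kernelConst_pos {k : ℝ} (hk : 0 < k) : 0 < kernelConst k :=
  div_pos (mul_pos (mul_pos three_pos (Gamma_pos_of_pos (by positivity))) (rankOneConst_pos hk))
    (pow_pos (Gamma_pos_of_pos hk) 2)

theorem EkA2_eq {k l1 l2 l3 : ℝ} (hk : 0 < k) (h12 : l2 ≤ l1) (h23 : l3 ≤ l2) (x1 x2 x3 : ℝ) :
    EkA2 k x1 x2 x3 l1 l2 l3 =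
      kernelConst k *
        (exp (l1 * x3 + l2 * x1 + l3 * x2 - (l1 + l2 + l3) * x3) / Vlam l1 l2 l3 ^ (2 * k) *
          reducedIntegral k (l1 - l2) (l2 - l3) (x3 - x1) (x1 - x2)) := by
  have shift (lo hi : ℝ) (F : ℝ → ℝ) : ∫ n in lo..hi, F n = ∫ u in 0..hi - lo, F (lo + u) := by
    simp
  have hintegral : ∫ t in 0..l2 - l3, ∫ s in 0..l1 - l2, _ = _ :=
    intervalIntegral.integral_congr fun t ht => intervalIntegral.integral_congr fun s hs =>
      EkA2_integrand_eq (l1 := l1) (l2 := l2) (l3 := l3) hk x1 x2 x3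
        (Set.uIcc_of_le (sub_nonneg.2 h23) ▸ ht).1 (Set.uIcc_of_le (sub_nonneg.2 h12) ▸ hs).1
        (Set.uIcc_of_le (sub_nonneg.2 h23) ▸ ht).2 (Set.uIcc_of_le (sub_nonneg.2 h12) ▸ hs).2
  rw [EkA2, shift l3 l2]
  simp only [shift l2 l1]
  rw [hintegral]
  simp only [intervalIntegral.integral_const_mul]
  rw [reducedIntegral, kernelConst]
  ring

theorem measurable_reducedIntegrand (k A B a b : ℝ) :
    Measurable (Function.uncurry (reducedIntegrand k A B a b)) := by
  have hkummer (p q : ℝ) : Measurable fun z : ℝ × ℝ =>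
      kummerIntegral p q 2 (b / 2 * (z.2 + (B - z.1))) :=
    measurable_kummerIntegral.comp (by fun_prop)
  have := hkummer k (k + 1)
  have := hkummer (k + 1) k
  unfold Function.uncurry reducedIntegrand
  fun_prop

section Pointwise

variable {k A B a b t s : ℝ}

theorem reducedIntegrand_nonneg (ht : t ∈ Set.Ioo 0 B) (hs : s ∈ Set.Ioo 0 A) :
    0 ≤ reducedIntegrand k A B a b t s := by
  obtain ⟨ht0, htB⟩ := ht
  obtain ⟨hs0, hsA⟩ := hs
  have := sub_pos.2 htB
  have := sub_pos.2 hsA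
  have : 0 < A := hs0.trans hsA
  have : 0 < B := ht0.trans htB
  have hkummer (p q y : ℝ) : 0 ≤ kummerIntegral p q 2 y := kummerIntegral_nonneg zero_le_two
  have := hkummer k (k + 1) (b / 2 * (s + (B - t)))
  have := hkummer (k + 1) k (b / 2 * (s + (B - t)))
  rw [reducedIntegrand]
  positivity

theorem exists_kummerIntegral_mul_exp_neg_le {p q : ℝ} (hp : 0 < p) (hq : 0 < q) :
    ∃ C > 0, ∀ a b B v t : ℝ, 0 ≤ a → 0 ≤ b → 0 ≤ B → 0 ≤ v → 0 ≤ t → B ≤ v + t →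
      kummerIntegral p q 2 (b / 2 * v) * exp (-((a + b) * t)) ≤
        C / (1 + B * b) ^ p * exp (-((a + b) / 2 * t)) := by
  obtain ⟨C, hC, hkummer⟩ := exists_kummerIntegral_le hp hq
  obtain ⟨D, hD, hdecay⟩ := exists_exp_neg_div_rpow_le hp one_half_pos
  refine ⟨C * 2 ^ (p + q - 1) * D, by positivity, fun a b B v t ha hb hB hv ht hBvt => ?_⟩
  have hsize := hkummer 2 (b / 2 * v) two_pos (by positivity)
  rw [show b / 2 * v * 2 = b * v by ring] at hsize
  have hsplit :
      exp (-((a + b) * t)) ≤ exp (-(1 / 2 * (b * t))) * exp (-((a + b) / 2 * t)) := by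
    rw [← exp_add, exp_le_exp]
    nlinarith [mul_nonneg ha ht]
  calc kummerIntegral p q 2 (b / 2 * v) * exp (-((a + b) * t))
      ≤ C * (2 ^ (p + q - 1) / (1 + b * v) ^ p) *
          (exp (-(1 / 2 * (b * t))) * exp (-((a + b) / 2 * t))) := by gcongr
    _ = C * 2 ^ (p + q - 1) * (exp (-(1 / 2 * (b * t))) / (1 + b * v) ^ p) *
          exp (-((a + b) / 2 * t)) := by ring
    _ ≤ C * 2 ^ (p + q - 1) * (D / (1 + B * b) ^ p) * exp (-((a + b) / 2 * t)) := by
        gcongr _ * ?_ * _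
        exact hdecay (b * v) (b * t) (B * b) (by positivity) (by positivity) (by positivity)
          (by nlinarith)
    _ = _ := by ring

theorem reducedIntegrand_le_of_kummerIntegral_le {M₁ M₂ : ℝ} (hk : 0 < k)
    (ht : t ∈ Set.Ioo 0 B) (hs : s ∈ Set.Ioo 0 A)
    (h₁ : kummerIntegral k (k + 1) 2 (b / 2 * (s + (B - t))) * exp (-((a + b) * t)) ≤ M₁)
    (h₂ : kummerIntegral (k + 1) k 2 (b / 2 * (s + (B - t))) * exp (-((a + b) * t)) ≤ M₂) :
    reducedIntegrand k A B a b t s ≤ (A + B) ^ (2 * k) * (t ^ k * (B - t) ^ (k - 1)) *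
      (kummerWeight (k + 1) k A a s * M₁ + kummerWeight k (k + 1) A a s * M₂) := by
  obtain ⟨ht0, htB⟩ := ht
  obtain ⟨hs0, hsA⟩ := hs
  have ht' := sub_pos.2 htB
  have := sub_pos.2 hsA
  have hA : 0 < A := hs0.trans hsA
  have hB : 0 < B := ht0.trans htB
  have hg : A + (B - t) ≤ A + B := by linarith
  have hh : B + s ≤ A + B := by linarith
  have hswap : (B - t) ^ k * (A + (B - t)) ^ (k - 1) ≤ (B - t) ^ (k - 1) * (A + B) ^ k :=
    (rpow_mul_rpow_sub_one_le ht' (by linarith) k).trans (by gcongr)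
  set K₁ := kummerIntegral k (k + 1) 2 (b / 2 * (s + (B - t)))
  set K₂ := kummerIntegral (k + 1) k 2 (b / 2 * (s + (B - t)))
  have hK₁ : 0 ≤ K₁ := kummerIntegral_nonneg zero_le_two
  have hK₂ : 0 ≤ K₂ := kummerIntegral_nonneg zero_le_two
  calc reducedIntegrand k A B a b t s
      = t ^ k * exp (-(a * s)) * (B + s) ^ k *
          (s ^ k * (A - s) ^ (k - 1) * ((B - t) ^ (k - 1) * (A + (B - t)) ^ k) *
              (K₁ * exp (-((a + b) * t))) +
            s ^ (k - 1) * (A - s) ^ k * ((B - t) ^ k * (A + (B - t)) ^ (k - 1)) *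
              (K₂ * exp (-((a + b) * t)))) := by
        rw [reducedIntegrand]; ring
    _ ≤ t ^ k * exp (-(a * s)) * (A + B) ^ k *
          (s ^ k * (A - s) ^ (k - 1) * ((B - t) ^ (k - 1) * (A + B) ^ k) * M₁ +
            s ^ (k - 1) * (A - s) ^ k * ((B - t) ^ (k - 1) * (A + B) ^ k) * M₂) := by
        gcongr _ * ?_ ^ _ * (_ * (_ * ?_ ^ _) * ?_ + _ * ?_ * ?_)
    _ = _ := by
        simp only [kummerWeight, add_sub_cancel_right]
        rw [two_mul, rpow_add (by positivity)]
        ring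

theorem exists_reducedIntegrand_le_kummerWeight_mul (hk : 0 < k) :
    ∃ C > 0, ∀ A B a b t s : ℝ, 0 ≤ a → 0 ≤ b → t ∈ Set.Ioo 0 B → s ∈ Set.Ioo 0 A →
      reducedIntegrand k A B a b t s ≤
        kummerWeight (k + 1) k B ((a + b) / 2) t * (C * (A + B) ^ (2 * k) *
          (kummerWeight (k + 1) k A a s / (1 + B * b) ^ k +
            kummerWeight k (k + 1) A a s / (1 + B * b) ^ (k + 1))) := by
  obtain ⟨C₁, hC₁, hkummer₁⟩ := exists_kummerIntegral_mul_exp_neg_le hk (add_pos hk one_pos)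
  obtain ⟨C₂, -, hkummer₂⟩ := exists_kummerIntegral_mul_exp_neg_le (add_pos hk one_pos) hk
  refine ⟨max C₁ C₂, by positivity, fun A B a b t s ha hb ht hs => ?_⟩
  have hB : 0 ≤ B := (ht.1.trans ht.2).le
  have ht' : 0 ≤ B - t := sub_nonneg.2 ht.2.le
  have hv : 0 ≤ s + (B - t) := add_nonneg hs.1.le ht'
  have hBvt : B ≤ s + (B - t) + t := by linarith [hs.1]
  have ht0 : 0 ≤ t := ht.1.le
  have hAB : 0 ≤ A + B := add_nonneg (hs.1.trans hs.2).le hB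
  have hW₁ : 0 ≤ kummerWeight (k + 1) k A a s := kummerWeight_nonneg hs.1.le hs.2.le
  have hW₂ : 0 ≤ kummerWeight k (k + 1) A a s := kummerWeight_nonneg hs.1.le hs.2.le
  calc reducedIntegrand k A B a b t s
      ≤ (A + B) ^ (2 * k) * (t ^ k * (B - t) ^ (k - 1)) *
          (kummerWeight (k + 1) k A a s * (C₁ / (1 + B * b) ^ k * exp (-((a + b) / 2 * t))) +
            kummerWeight k (k + 1) A a s *
              (C₂ / (1 + B * b) ^ (k + 1) * exp (-((a + b) / 2 * t)))) :=
        reducedIntegrand_le_of_kummerIntegral_le hk ht hs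
          (hkummer₁ a b B _ t ha hb hB hv ht0 hBvt) (hkummer₂ a b B _ t ha hb hB hv ht0 hBvt)
    _ ≤ (A + B) ^ (2 * k) * (t ^ k * (B - t) ^ (k - 1)) *
          (kummerWeight (k + 1) k A a s *
              (max C₁ C₂ / (1 + B * b) ^ k * exp (-((a + b) / 2 * t))) +
            kummerWeight k (k + 1) A a s *
              (max C₁ C₂ / (1 + B * b) ^ (k + 1) * exp (-((a + b) / 2 * t)))) := by
        gcongr
        · exact le_max_left C₁ C₂
        · exact le_max_right C₁ C₂
    _ = _ := by
        simp only [kummerWeight, add_sub_cancel_right]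
        ring

theorem exists_kummerWeight_mul_le_reducedIntegrand (hk : 0 < k) :
    ∃ c > 0, ∀ A B a b t s : ℝ, A ≤ B → 0 ≤ b → t ∈ Set.Ioo 0 B → s ∈ Set.Ioo 0 A →
      c * (A + B) ^ k / (1 + B * b) ^ k * kummerWeight (k + 1) (2 * k) B (a + b) t *
        kummerWeight (k + 1) k A a s ≤ reducedIntegrand k A B a b t s := by
  obtain ⟨c, hc, hkummer⟩ := exists_le_kummerIntegral hk (add_pos hk one_pos)
  refine ⟨c * 2 ^ (2 * k) / 2 ^ k / 2 ^ k, by positivity,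
    fun A B a b t s hAB hb ⟨ht, htB⟩ ⟨hs, hsA⟩ => ?_⟩
  have ht' := sub_pos.2 htB
  have := sub_pos.2 hsA
  have hA : 0 < A := hs.trans hsA
  have hB : 0 < B := ht.trans htB
  have hK₁ : c * (2 ^ (2 * k) / (2 * (1 + B * b)) ^ k) ≤
      kummerIntegral k (k + 1) 2 (b / 2 * (s + (B - t))) := by
    refine le_trans ?_ (hkummer 2 _ two_pos (by positivity))
    rw [show k + (k + 1) - 1 = 2 * k by ring]
    gcongr
    nlinarith
  have hK₂ : 0 ≤ kummerIntegral (k + 1) k 2 (b / 2 * (s + (B - t))) :=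
    kummerIntegral_nonneg zero_le_two
  have hpow : (B - t) ^ (2 * k - 1) = (B - t) ^ (k - 1) * (B - t) ^ k := by
    rw [← rpow_add ht']; ring_nf
  calc c * 2 ^ (2 * k) / 2 ^ k / 2 ^ k * (A + B) ^ k / (1 + B * b) ^ k *
        kummerWeight (k + 1) (2 * k) B (a + b) t * kummerWeight (k + 1) k A a s
      = t ^ k * exp (-((a + b) * t)) * exp (-(a * s)) * ((A + B) / 2) ^ k *
          (s ^ k * (A - s) ^ (k - 1) * (B - t) ^ (k - 1) * (B - t) ^ k *
            (c * (2 ^ (2 * k) / (2 * (1 + B * b)) ^ k))) := by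
        simp only [kummerWeight, add_sub_cancel_right]
        rw [hpow, div_rpow (by positivity) zero_le_two, mul_rpow zero_le_two (by positivity)]
        ring
    _ ≤ t ^ k * exp (-((a + b) * t)) * exp (-(a * s)) * (B + s) ^ k *
          (s ^ k * (A - s) ^ (k - 1) * (B - t) ^ (k - 1) * (A + (B - t)) ^ k *
            kummerIntegral k (k + 1) 2 (b / 2 * (s + (B - t)))) := by
        gcongr <;> linarith
    _ ≤ reducedIntegrand k A B a b t s := by
        rw [reducedIntegrand]
        gcongr
        exact le_add_of_nonneg_right (by positivity)

end Pointwise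

section Integral

variable {k A B a b : ℝ}

theorem integrableOn_reducedIntegrand (hk : 0 < k) (hA : 0 < A) (hB : 0 < B) (ha : 0 ≤ a)
    (hb : 0 ≤ b) :
    IntegrableOn (Function.uncurry (reducedIntegrand k A B a b))
      (Set.Ioo 0 B ×ˢ Set.Ioo 0 A) := by
  obtain ⟨C, -, hle⟩ := exists_reducedIntegrand_le_kummerWeight_mul hk
  have hk1 : 0 < k + 1 := by positivity
  have hf := intervalIntegrable_kummerWeight hk1 hk hB ((a + b) / 2)
  have hg := (((intervalIntegrable_kummerWeight hk1 hk hA a).div_const ((1 + B * b) ^ k)).add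
    ((intervalIntegrable_kummerWeight hk hk1 hA a).div_const ((1 + B * b) ^ (k + 1)))).const_mul
      (C * (A + B) ^ (2 * k))
  exact integrableOn_Ioo_prod_of_le_mul hB.le hA.le (measurable_reducedIntegrand k A B a b) hf hg
    (fun t ht s hs => reducedIntegrand_nonneg ht hs)
    fun t ht s hs => hle A B a b t s ha hb ht hs

theorem exists_reducedIntegral_le_kummerIntegral_mul (hk : 0 < k) :
    ∃ C > 0, ∀ A B a b : ℝ, 0 < A → 0 < B → 0 ≤ a → 0 ≤ b →
      reducedIntegral k A B a b ≤
        kummerIntegral (k + 1) k B ((a + b) / 2) * (C * (A + B) ^ (2 * k) *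
          (kummerIntegral (k + 1) k A a / (1 + B * b) ^ k +
            kummerIntegral k (k + 1) A a / (1 + B * b) ^ (k + 1))) := by
  obtain ⟨C, hC, hle⟩ := exists_reducedIntegrand_le_kummerWeight_mul hk
  refine ⟨C, hC, fun A B a b hA hB ha hb => ?_⟩
  have hk1 : 0 < k + 1 := by positivity
  have hf := intervalIntegrable_kummerWeight hk1 hk hB ((a + b) / 2)
  have hg₁ := (intervalIntegrable_kummerWeight hk1 hk hA a).div_const ((1 + B * b) ^ k)
  have hg₂ := (intervalIntegrable_kummerWeight hk hk1 hA a).div_const ((1 + B * b) ^ (k + 1))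
  have hmono := integral_integral_mono hB.le hA.le
    (integrableOn_reducedIntegrand hk hA hB ha hb)
    (integrableOn_Ioo_prod_mul hB.le hA.le hf ((hg₁.add hg₂).const_mul (C * (A + B) ^ (2 * k))))
    fun t ht s hs => hle A B a b t s ha hb ht hs
  rwa [integral_integral_mul, intervalIntegral.integral_const_mul,
    intervalIntegral.integral_add hg₁ hg₂, intervalIntegral.integral_div,
    intervalIntegral.integral_div] at hmono

theorem exists_kummerIntegral_mul_le_reducedIntegral (hk : 0 < k) :
    ∃ c > 0, ∀ A B a b : ℝ, 0 < A → A ≤ B → 0 ≤ a → 0 ≤ b →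
      c * (A + B) ^ k / (1 + B * b) ^ k * kummerIntegral (k + 1) (2 * k) B (a + b) *
        kummerIntegral (k + 1) k A a ≤ reducedIntegral k A B a b := by
  obtain ⟨c, hc, hle⟩ := exists_kummerWeight_mul_le_reducedIntegrand hk
  refine ⟨c, hc, fun A B a b hA hAB ha hb => ?_⟩
  have hB : 0 < B := hA.trans_le hAB
  have hk1 : 0 < k + 1 := by positivity
  have hf := (intervalIntegrable_kummerWeight hk1 (mul_pos two_pos hk) hB (a + b)).const_mul
    (c * (A + B) ^ k / (1 + B * b) ^ k)
  have hmono := integral_integral_mono hB.le hA.le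
    (integrableOn_Ioo_prod_mul hB.le hA.le hf (intervalIntegrable_kummerWeight hk1 hk hA a))
    (integrableOn_reducedIntegrand hk hA hB ha hb)
    fun t ht s hs => hle A B a b t s hAB hb ht hs
  rwa [integral_integral_mul, intervalIntegral.integral_const_mul] at hmono

theorem exists_kummerIntegral_div_rpow_le (hk : 0 < k) :
    ∃ C > 0, ∀ A B a b : ℝ, 0 < A → 0 ≤ a → A * a ≤ B * b →
      kummerIntegral k (k + 1) A a / (1 + B * b) ^ (k + 1) ≤
        C * (A ^ (2 * k) / (1 + A * a) ^ (k + 1)) / (1 + B * b) ^ k := by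
  obtain ⟨C, hC, hkummer⟩ := exists_kummerIntegral_le hk (add_pos hk one_pos)
  rw [show k + (k + 1) - 1 = 2 * k by ring] at hkummer
  refine ⟨C, hC, fun A B a b hA ha hab => ?_⟩
  have hQ : 0 < 1 + A * a := by positivity
  have hS : 0 < 1 + B * b := by linarith
  have hswap := rpow_mul_rpow_sub_one_le hQ (add_le_add_right hab 1) (k + 1)
  rw [add_sub_cancel_right] at hswap
  calc kummerIntegral k (k + 1) A a / (1 + B * b) ^ (k + 1)
      ≤ C * (A ^ (2 * k) / (1 + A * a) ^ k) / (1 + B * b) ^ (k + 1) := by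
        gcongr
        simpa only [mul_comm a] using hkummer A a hA ha
    _ = C * A ^ (2 * k) / ((1 + A * a) ^ k * (1 + B * b) ^ (k + 1)) := by ring
    _ ≤ C * A ^ (2 * k) / ((1 + A * a) ^ (k + 1) * (1 + B * b) ^ k) := by gcongr
    _ = _ := by ring

theorem exists_reducedIntegral_le (hk : 0 < k) :
    ∃ C > 0, ∀ A B a b : ℝ, 0 < A → A ≤ B → 0 ≤ a → 0 ≤ b → A * a ≤ B * b →
      reducedIntegral k A B a b ≤ C * ((A * (A + B) * B) ^ (2 * k) /
        ((1 + A * a) ^ (k + 1) * (1 + B * b) ^ k * (1 + (A + B) * (a + b)) ^ (k + 1))) := by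
  obtain ⟨C, hC, hle⟩ := exists_reducedIntegral_le_kummerIntegral_mul hk
  obtain ⟨D, hD, hkummer⟩ := exists_kummerIntegral_le (add_pos hk one_pos) hk
  obtain ⟨D', hD', hkummer'⟩ := exists_kummerIntegral_div_rpow_le hk
  rw [show k + 1 + k - 1 = 2 * k by ring] at hkummer
  refine ⟨D * 4 ^ (k + 1) * C * (D + D'), by positivity, fun A B a b hA hAB ha hb hab => ?_⟩
  have hB : 0 < B := hA.trans_le hAB
  have hI : kummerIntegral (k + 1) k B ((a + b) / 2) ≤
      D * (B ^ (2 * k) / ((1 + (A + B) * (a + b)) / 4) ^ (k + 1)) := by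
    refine (hkummer B ((a + b) / 2) hB (by positivity)).trans ?_
    gcongr
    nlinarith [mul_le_mul_of_nonneg_right hAB (add_nonneg ha hb)]
  have hJ : kummerIntegral (k + 1) k A a ≤ D * (A ^ (2 * k) / (1 + A * a) ^ (k + 1)) := by
    simpa only [mul_comm a] using hkummer A a hA ha
  have hJ' := hkummer' A B a b hA ha hab
  calc reducedIntegral k A B a b
      ≤ kummerIntegral (k + 1) k B ((a + b) / 2) * (C * (A + B) ^ (2 * k) *
          (kummerIntegral (k + 1) k A a / (1 + B * b) ^ k +
            kummerIntegral k (k + 1) A a / (1 + B * b) ^ (k + 1))) :=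
        hle A B a b hA hB ha hb
    _ ≤ D * (B ^ (2 * k) / ((1 + (A + B) * (a + b)) / 4) ^ (k + 1)) *
          (C * (A + B) ^ (2 * k) *
            (D * (A ^ (2 * k) / (1 + A * a) ^ (k + 1)) / (1 + B * b) ^ k +
              D' * (A ^ (2 * k) / (1 + A * a) ^ (k + 1)) / (1 + B * b) ^ k)) := by
        have : 0 ≤ kummerIntegral (k + 1) k A a := kummerIntegral_nonneg hA.le
        have : 0 ≤ kummerIntegral k (k + 1) A a := kummerIntegral_nonneg hA.le
        gcongr ?_ * (_ * (?_ / _ + ?_))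
    _ = _ := by
        rw [div_rpow (by positivity) (by norm_num), mul_rpow (by positivity) hB.le,
          mul_rpow hA.le (by positivity)]
        field_simp

theorem exists_le_reducedIntegral (hk : 0 < k) :
    ∃ c > 0, ∀ A B a b : ℝ, 0 < A → A ≤ B → 0 ≤ a → 0 ≤ b →
      c * ((A * (A + B) * B) ^ (2 * k) /
          ((1 + A * a) ^ (k + 1) * (1 + B * b) ^ k * (1 + (A + B) * (a + b)) ^ (k + 1))) ≤
        reducedIntegral k A B a b := by
  have hk1 : 0 < k + 1 := by positivity
  obtain ⟨c, hc, hle⟩ := exists_kummerIntegral_mul_le_reducedIntegral hk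
  obtain ⟨d, hd, hkummer⟩ := exists_le_kummerIntegral hk1 (mul_pos two_pos hk)
  obtain ⟨d', hd', hkummer'⟩ := exists_le_kummerIntegral hk1 hk
  rw [show k + 1 + 2 * k - 1 = 2 * k + k by ring] at hkummer
  rw [show k + 1 + k - 1 = 2 * k by ring] at hkummer'
  refine ⟨c * d * d' / 2 ^ k, by positivity, fun A B a b hA hAB ha hb => ?_⟩
  have hB : 0 < B := hA.trans_le hAB
  have hI : d * (B ^ (2 * k) * ((A + B) / 2) ^ k / (1 + (A + B) * (a + b)) ^ (k + 1)) ≤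
      kummerIntegral (k + 1) (2 * k) B (a + b) := by
    refine le_trans ?_ (hkummer B (a + b) hB (by positivity))
    rw [rpow_add hB, mul_comm (A + B)]
    gcongr <;> linarith
  have hJ : d' * (A ^ (2 * k) / (1 + A * a) ^ (k + 1)) ≤ kummerIntegral (k + 1) k A a := by
    simpa only [mul_comm a] using hkummer' A a hA ha
  calc c * d * d' / 2 ^ k * ((A * (A + B) * B) ^ (2 * k) /
          ((1 + A * a) ^ (k + 1) * (1 + B * b) ^ k * (1 + (A + B) * (a + b)) ^ (k + 1)))
      = c * (A + B) ^ k / (1 + B * b) ^ k *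
          (d * (B ^ (2 * k) * ((A + B) / 2) ^ k / (1 + (A + B) * (a + b)) ^ (k + 1)) *
            (d' * (A ^ (2 * k) / (1 + A * a) ^ (k + 1)))) := by
        rw [mul_rpow (by positivity) hB.le, mul_rpow hA.le (by positivity), two_mul k,
          rpow_add (show 0 < A + B by positivity), div_rpow (by positivity) zero_le_two]
        ring
    _ ≤ c * (A + B) ^ k / (1 + B * b) ^ k *
          (kummerIntegral (k + 1) (2 * k) B (a + b) * kummerIntegral (k + 1) k A a) := by
        have : 0 ≤ kummerIntegral (k + 1) (2 * k) B (a + b) := kummerIntegral_nonneg hB.le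
        gcongr
    _ ≤ reducedIntegral k A B a b := (mul_assoc _ _ _).symm.trans_le (hle A B a b hA hAB ha hb)

end Integral

theorem Vlam_pos {l1 l2 l3 : ℝ} (h12 : l2 < l1) (h23 : l3 < l2) : 0 < Vlam l1 l2 l3 :=
  mul_pos (mul_pos (sub_pos.2 h12) (sub_pos.2 (h23.trans h12))) (sub_pos.2 h23)

theorem exists_le_EkA2 {k : ℝ} (hk : 0 < k) :
    ∃ c > 0, ∀ l1 l2 l3 x1 x2 x3 : ℝ, l2 < l1 → l3 < l2 → x1 ≤ x3 → x2 ≤ x1 →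
      l1 - l2 ≤ l2 - l3 →
      c * (exp (l1 * x3 + l2 * x1 + l3 * x2 - (l1 + l2 + l3) * x3) /
          ((1 + (l1 - l2) * (x3 - x1)) ^ (k + 1) * (1 + (l2 - l3) * (x1 - x2)) ^ k
            * (1 + (l1 - l3) * (x3 - x2)) ^ (k + 1)))
        ≤ EkA2 k x1 x2 x3 l1 l2 l3 := by
  obtain ⟨c, hc, hlower⟩ := exists_le_reducedIntegral hk
  have hG := kernelConst_pos hk
  refine ⟨kernelConst k * c, by positivity,
    fun l1 l2 l3 x1 x2 x3 h12 h23 h13x h21x hAB => ?_⟩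
  have hV := Vlam_pos h12 h23
  have hint := hlower (l1 - l2) (l2 - l3) (x3 - x1) (x1 - x2) (sub_pos.2 h12) hAB
    (sub_nonneg.2 h13x) (sub_nonneg.2 h21x)
  rw [sub_add_sub_cancel, sub_add_sub_cancel, ← Vlam] at hint
  rw [EkA2_eq hk h12.le h23.le]
  refine le_trans (le_of_eq ?_) (mul_le_mul_of_nonneg_left
    (mul_le_mul_of_nonneg_left hint (by positivity)) hG.le)
  field_simp

theorem exists_EkA2_le {k : ℝ} (hk : 0 < k) :
    ∃ C > 0, ∀ l1 l2 l3 x1 x2 x3 : ℝ, l2 < l1 → l3 < l2 → x1 ≤ x3 → x2 ≤ x1 →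
      l1 - l2 ≤ l2 - l3 → (l1 - l2) * (x3 - x1) ≤ (l2 - l3) * (x1 - x2) →
      EkA2 k x1 x2 x3 l1 l2 l3 ≤
        C * (exp (l1 * x3 + l2 * x1 + l3 * x2 - (l1 + l2 + l3) * x3) /
          ((1 + (l1 - l2) * (x3 - x1)) ^ (k + 1) * (1 + (l2 - l3) * (x1 - x2)) ^ k
            * (1 + (l1 - l3) * (x3 - x2)) ^ (k + 1))) := by
  obtain ⟨C, hC, hupper⟩ := exists_reducedIntegral_le hk
  have hG := kernelConst_pos hk
  refine ⟨kernelConst k * C, by positivity,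
    fun l1 l2 l3 x1 x2 x3 h12 h23 h13x h21x hAB hab => ?_⟩
  have hV := Vlam_pos h12 h23
  have hint := hupper (l1 - l2) (l2 - l3) (x3 - x1) (x1 - x2) (sub_pos.2 h12) hAB
    (sub_nonneg.2 h13x) (sub_nonneg.2 h21x) hab
  rw [sub_add_sub_cancel, sub_add_sub_cancel, ← Vlam] at hint
  rw [EkA2_eq hk h12.le h23.le]
  refine (mul_le_mul_of_nonneg_left
    (mul_le_mul_of_nonneg_left hint (by positivity)) hG.le).trans_eq ?_
  field_simp

/-- For `λ` of nonzero trace the integral defining `EkA2` lacks the factor `e^(x₃(λ₁+λ₂+λ₃))`; hence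
the last term of the exponent. -/
theorem estimate_C312_case3_general (k : ℝ) (hk : 0 < k) :
    ∃ C : ℝ, 0 < C ∧ ∀ l1 l2 l3 x1 x2 x3 : ℝ,
      l2 < l1 →
      l3 < l2 →
      x1 ≤ x3 →
      x2 ≤ x1 →
      l1 - l2 ≤ l2 - l3 →
      (l1 - l2) * (x3 - x1) ≤ (l2 - l3) * (x1 - x2) →
      (C⁻¹ * (exp (l1 * x3 + l2 * x1 + l3 * x2 - (l1 + l2 + l3) * x3) /
          ((1 + (l1 - l2) * (x3 - x1)) ^ (k + 1) * (1 + (l2 - l3) * (x1 - x2)) ^ k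
            * (1 + (l1 - l3) * (x3 - x2)) ^ (k + 1)))
        ≤ EkA2 k x1 x2 x3 l1 l2 l3 ∧
      EkA2 k x1 x2 x3 l1 l2 l3
        ≤ C * (exp (l1 * x3 + l2 * x1 + l3 * x2 - (l1 + l2 + l3) * x3) /
          ((1 + (l1 - l2) * (x3 - x1)) ^ (k + 1) * (1 + (l2 - l3) * (x1 - x2)) ^ k
            * (1 + (l1 - l3) * (x3 - x2)) ^ (k + 1)))) := by
  obtain ⟨c, hc, hlower⟩ := exists_le_EkA2 hk
  obtain ⟨C, hC, hupper⟩ := exists_EkA2_le hk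
  refine ⟨max C c⁻¹, by positivity, fun l1 l2 l3 x1 x2 x3 h12 h23 h13x h21x hAB hab => ?_⟩
  have : 0 < l1 - l2 := sub_pos.2 h12
  have : 0 < l2 - l3 := sub_pos.2 h23
  have : 0 < l1 - l3 := sub_pos.2 (h23.trans h12)
  have : 0 ≤ x3 - x1 := sub_nonneg.2 h13x
  have : 0 ≤ x1 - x2 := sub_nonneg.2 h21x
  have : 0 ≤ x3 - x2 := sub_nonneg.2 (h21x.trans h13x)
  constructor
  · refine le_trans ?_ (hlower l1 l2 l3 x1 x2 x3 h12 h23 h13x h21x hAB)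
    gcongr
    exact inv_le_of_inv_le₀ hc (le_max_right C c⁻¹)
  · refine (hupper l1 l2 l3 x1 x2 x3 h12 h23 h13x h21x hAB hab).trans ?_
    gcongr
    exact le_max_left C c⁻¹

/-- Theorem 4.1: sharp estimate of the `A₂` Dunkl kernel. -/
theorem estimate_C312_case3 (k : ℝ) (hk : 0 < k) :
    ∃ C : ℝ, 0 < C ∧ ∀ l1 l2 l3 x1 x2 x3 : ℝ,
      l1 + l2 + l3 = 0 →
      l2 < l1 →
      l3 < l2 →
      x1 + x2 + x3 = 0 →
      x1 ≤ x3 →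
      x2 ≤ x1 →
      l1 - l2 ≤ l2 - l3 →
      (l1 - l2) * (x3 - x1) ≤ (l2 - l3) * (x1 - x2) →
      (C⁻¹ * (Real.exp (l1 * x3 + l2 * x1 + l3 * x2) /
          ((1 + (l1 - l2) * (x3 - x1)) ^ (k + 1) * (1 + (l2 - l3) * (x1 - x2)) ^ k
            * (1 + (l1 - l3) * (x3 - x2)) ^ (k + 1)))
        ≤ EkA2 k x1 x2 x3 l1 l2 l3 ∧
      EkA2 k x1 x2 x3 l1 l2 l3
        ≤ C * (Real.exp (l1 * x3 + l2 * x1 + l3 * x2) /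
          ((1 + (l1 - l2) * (x3 - x1)) ^ (k + 1) * (1 + (l2 - l3) * (x1 - x2)) ^ k
            * (1 + (l1 - l3) * (x3 - x2)) ^ (k + 1)))) := by
  obtain ⟨C, hC, hbounds⟩ := estimate_C312_case3_general k hk
  refine ⟨C, hC, fun l1 l2 l3 x1 x2 x3 hl h12 h23 _ => ?_⟩
  simpa only [hl, zero_mul, sub_zero] using hbounds l1 l2 l3 x1 x2 x3 h12 h23
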